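/- The rank-11 lattice ⟨2⟩ ⊕ ⟨-2⟩^{⊕10} (Gram matrix diag(2,-2,-2,...,-2)) is isometric to the lattice U(2) ⊕ E8(2) ⊕ ⟨-2⟩. -/

import Mathlib

open Matrix

/-- The hyperbolic plane `U`, with Gram matrix `[[0,1],[1,0]]`. -/
abbrev latU : Matrix (Fin 2) (Fin 2) ℤ := !![0, 1; 1, 0]

/-- The negative definite even unimodular lattice `E₈` (negative of the Cartan matrix). -/
abbrev latE8 : Matrix (Fin 8) (Fin 8) ℤ :=
  !![-2,  0,  1,  0,  0,  0,  0,  0;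
      0, -2,  0,  1,  0,  0,  0,  0;
      1,  0, -2,  1,  0,  0,  0,  0;
      0,  1,  1, -2,  1,  0,  0,  0;
      0,  0,  0,  1, -2,  1,  0,  0;
      0,  0,  0,  0,  1, -2,  1,  0;
      0,  0,  0,  0,  0,  1, -2,  1;
      0,  0,  0,  0,  0,  0,  1, -2]

/-- Orthogonal direct sum of two lattices (block-diagonal Gram matrix). -/
def dsum {a b : ℕ} (A : Matrix (Fin a) (Fin a) ℤ) (B : Matrix (Fin b) (Fin b) ℤ) :
    Matrix (Fin (a + b)) (Fin (a + b)) ℤ :=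
  Matrix.reindex finSumFinEquiv finSumFinEquiv (Matrix.fromBlocks A 0 0 B)


/-- `⟨2⟩ ⊕ ⟨-2⟩^{⊕10}`, the Gram matrix `diag(2,-2,…,-2)` of rank 11. -/
def gramA : Matrix (Fin 11) (Fin 11) ℤ :=
  Matrix.diagonal ![2, -2, -2, -2, -2, -2, -2, -2, -2, -2, -2]

/-- `U(2) ⊕ E8(2) ⊕ ⟨-2⟩`. -/
def gramB : Matrix (Fin 11) (Fin 11) ℤ := dsum (dsum (2 • latU) (2 • latE8)) !![(-2 : ℤ)]

/-!
Dividing both forms by `2`, it suffices to split the odd unimodular lattice `I_{1,10}` as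
`U ⊕ E₈ ⊕ ⟨-1⟩`. Regard `I_{1,10}` as the Picard lattice of the plane blown up at ten points, with
hyperplane class `h`, exceptional classes `e₁, …, e₁₀` and canonical class `K = -3h + ∑ eᵢ`. Then
`K` has norm `-1`, and `K⊥` contains the isotropic classes `-K + e₁₀` and `-K + e₉`, which span a
copy of `U`, together with the roots `eᵢ - eᵢ₊₁` (`i ≤ 7`) and `h - e₁ - e₂ - e₃`, which span a copy
of `E₈` orthogonal to it. These three sublattices are unimodular and their ranks add up to `11`, so
comparing determinants shows that they fill out the whole lattice.
-/

section Isometry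

variable {n R : Type*} [Fintype n] [DecidableEq n] [CommRing R]

/-- The lattices with Gram matrices `A` and `B` are isometric: some invertible `P` pulls the form
`B` back to the form `A`. Both forms live on the same free module. -/
def IsIsometric (A B : Matrix n n R) : Prop :=
  ∃ P : Matrix n n R, IsUnit P.det ∧ Pᵀ * B * P = A

namespace IsIsometric

variable {A B : Matrix n n R}

theorem symm (h : IsIsometric A B) : IsIsometric B A := by
  obtain ⟨P, hP, rfl⟩ := h
  have hPt : IsUnit Pᵀ.det := by rwa [det_transpose]
  refine ⟨P⁻¹, P.isUnit_nonsing_inv_det hP, ?_⟩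
  calc P⁻¹ᵀ * (Pᵀ * B * P) * P⁻¹ = Pᵀ⁻¹ * (Pᵀ * (B * P * P⁻¹)) := by
        simp only [transpose_nonsing_inv, Matrix.mul_assoc]
    _ = B := by rw [mul_nonsing_inv_cancel_right _ _ hP, nonsing_inv_mul_cancel_left _ _ hPt]

theorem smul (h : IsIsometric A B) (c : R) : IsIsometric (c • A) (c • B) := by
  obtain ⟨P, hP, rfl⟩ := h
  exact ⟨P, hP, by rw [Matrix.mul_smul, Matrix.smul_mul]⟩

theorem of_gram_eq {P : Matrix n n R} (hA : IsUnit A.det) (hP : Pᵀ * B * P = A) :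
    IsIsometric A B := by
  refine ⟨P, ?_, hP⟩
  rw [← hP, det_mul] at hA
  exact isUnit_of_mul_isUnit_right hA

end IsIsometric

end Isometry

theorem transpose_fromCols_mul_mul_fromCols {n m₁ m₂ R : Type*} [Fintype n] [Semiring R]
    (G : Matrix n n R) (X : Matrix n m₁ R) (Y : Matrix n m₂ R) :
    (fromCols X Y)ᵀ * G * fromCols X Y =
      fromBlocks (Xᵀ * G * X) (Xᵀ * G * Y) (Yᵀ * G * X) (Yᵀ * G * Y) := by
  rw [transpose_fromCols, fromRows_mul, fromRows_mul_fromCols]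

section OrthogonalSum

variable {a b : ℕ}

theorem smul_dsum (c : ℤ) (A : Matrix (Fin a) (Fin a) ℤ) (B : Matrix (Fin b) (Fin b) ℤ) :
    c • dsum A B = dsum (c • A) (c • B) := by
  have hblocks : c • fromBlocks A 0 0 B = fromBlocks (c • A) 0 0 (c • B) := by
    rw [fromBlocks_smul, smul_zero, smul_zero]
  exact congrArg (reindex finSumFinEquiv finSumFinEquiv) hblocks

theorem det_dsum (A : Matrix (Fin a) (Fin a) ℤ) (B : Matrix (Fin b) (Fin b) ℤ) :
    (dsum A B).det = A.det * B.det := by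
  rw [dsum, det_reindex_self, det_fromBlocks_zero₂₁]

/-- The matrix whose columns are those of `X` followed by those of `Y`, indexed so that its Gram
matrices can be compared with `dsum`. -/
def appendCols {ι R : Type*} (X : Matrix ι (Fin a) R) (Y : Matrix ι (Fin b) R) :
    Matrix ι (Fin (a + b)) R :=
  (fromCols X Y).submatrix id finSumFinEquiv.symm

theorem gram_appendCols_of_orthogonal {ι : Type*} [Fintype ι] {G : Matrix ι ι ℤ}
    (hG : G.IsSymm) {X : Matrix ι (Fin a) ℤ} {Y : Matrix ι (Fin b) ℤ} (hXY : Xᵀ * G * Y = 0) :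
    (appendCols X Y)ᵀ * G * appendCols X Y = dsum (Xᵀ * G * X) (Yᵀ * G * Y) := by
  have hYX : Yᵀ * G * X = 0 := by
    simpa only [transpose_mul, transpose_transpose, hG.eq, transpose_zero, Matrix.mul_assoc]
      using congrArg transpose hXY
  calc (appendCols X Y)ᵀ * G * appendCols X Y
      = ((fromCols X Y)ᵀ * G * fromCols X Y).submatrix finSumFinEquiv.symm finSumFinEquiv.symm :=
        rfl
    _ = dsum (Xᵀ * G * X) (Yᵀ * G * Y) := by
        rw [transpose_fromCols_mul_mul_fromCols, hXY, hYX, dsum, reindex_apply]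

end OrthogonalSum

-- The inverse is the table of fundamental weights in terms of simple roots, negated.
theorem isUnit_det_latE8 : IsUnit latE8.det := by
  refine isUnit_det_of_right_inverse (B := -!![
    4,  5,  7, 10,  8,  6,  4,  2;
    5,  8, 10, 15, 12,  9,  6,  3;
    7, 10, 14, 20, 16, 12,  8,  4;
   10, 15, 20, 30, 24, 18, 12,  6;
    8, 12, 16, 24, 20, 15, 10,  5;
    6,  9, 12, 18, 15, 12,  8,  4;
    4,  6,  8, 12, 10,  8,  6,  3;
    2,  3,  4,  6,  5,  4,  3,  2]) ?_
  decide +kernel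

theorem isUnit_det_dsum_latU_latE8_neg_one :
    IsUnit (dsum (dsum latU latE8) !![-1]).det := by
  have hU : IsUnit latU.det := by simp [det_fin_two]
  have hneg : IsUnit (!![-1] : Matrix (Fin 1) (Fin 1) ℤ).det := by simp
  rw [det_dsum, det_dsum]
  exact (hU.mul isUnit_det_latE8).mul hneg

/-- The odd unimodular lattice `I_{1,n}`: the Picard lattice of the plane blown up at `n` points, in
the basis `h, e₁, …, eₙ` of the hyperplane class and the exceptional classes. -/
def lorentzian (n : ℕ) : Matrix (Fin (n + 1)) (Fin (n + 1)) ℤ :=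
  diagonal (Fin.cons 1 fun _ => -1)

theorem isSymm_lorentzian (n : ℕ) : (lorentzian n).IsSymm :=
  isSymm_diagonal _

/-- The canonical class `K = -3h + e₁ + ⋯ + e₁₀`. -/
def canonicalClass : Matrix (Fin 11) (Fin 1) ℤ :=
  !![-3, 1, 1, 1, 1, 1, 1, 1, 1, 1, 1]ᵀ

/-- The isotropic classes `-K + e₁₀` and `-K + e₉`. -/
def isotropicClasses : Matrix (Fin 11) (Fin 2) ℤ :=
  !![3, -1, -1, -1, -1, -1, -1, -1, -1, -1,  0;
     3, -1, -1, -1, -1, -1, -1, -1, -1,  0, -1]ᵀ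

/-- Simple roots of type `E₈` in `K⊥`, in the order of `latE8`: the second one, attached to the
branch node, is `h - e₁ - e₂ - e₃`, and the others are the differences `eᵢ - eᵢ₊₁`. -/
def simpleRoots : Matrix (Fin 11) (Fin 8) ℤ :=
  !![0,  1, -1,  0,  0,  0,  0,  0,  0, 0, 0;
     1, -1, -1, -1,  0,  0,  0,  0,  0, 0, 0;
     0,  0,  1, -1,  0,  0,  0,  0,  0, 0, 0;
     0,  0,  0,  1, -1,  0,  0,  0,  0, 0, 0;
     0,  0,  0,  0,  1, -1,  0,  0,  0, 0, 0;
     0,  0,  0,  0,  0,  1, -1,  0,  0, 0, 0;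
     0,  0,  0,  0,  0,  0,  1, -1,  0, 0, 0;
     0,  0,  0,  0,  0,  0,  0,  1, -1, 0, 0]ᵀ

theorem gram_canonicalClass :
    canonicalClassᵀ * lorentzian 10 * canonicalClass = !![-1] := by
  decide +kernel

theorem gram_isotropicClasses :
    isotropicClassesᵀ * lorentzian 10 * isotropicClasses = latU := by
  decide +kernel

theorem gram_simpleRoots :
    simpleRootsᵀ * lorentzian 10 * simpleRoots = latE8 := by
  decide +kernel

theorem isotropicClasses_orthogonal_simpleRoots :
    isotropicClassesᵀ * lorentzian 10 * simpleRoots = 0 := by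
  decide +kernel

theorem appendCols_isotropicClasses_simpleRoots_orthogonal_canonicalClass :
    (appendCols isotropicClasses simpleRoots)ᵀ * lorentzian 10 * canonicalClass = 0 := by
  decide +kernel

theorem isIsometric_dsum_latU_latE8_neg_one_lorentzian :
    IsIsometric (dsum (dsum latU latE8) !![-1]) (lorentzian 10) := by
  refine .of_gram_eq isUnit_det_dsum_latU_latE8_neg_one
    (P := appendCols (appendCols isotropicClasses simpleRoots) canonicalClass) ?_
  have hsymm := isSymm_lorentzian 10
  rw [gram_appendCols_of_orthogonal hsymm
      appendCols_isotropicClasses_simpleRoots_orthogonal_canonicalClass,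
    gram_appendCols_of_orthogonal hsymm isotropicClasses_orthogonal_simpleRoots,
    gram_isotropicClasses, gram_simpleRoots, gram_canonicalClass]

theorem gramA_eq_two_smul_lorentzian : gramA = (2 : ℤ) • lorentzian 10 := by
  decide +kernel

theorem gramB_eq_two_smul_dsum : gramB = (2 : ℤ) • dsum (dsum latU latE8) !![-1] := by
  have hneg : !![(-2 : ℤ)] = (2 : ℤ) • !![-1] := by decide
  rw [smul_dsum, smul_dsum, ← hneg]
  rfl

/-- The lattice `⟨2⟩ ⊕ ⟨-2⟩^{⊕10}` is isometric to `U(2) ⊕ E8(2) ⊕ ⟨-2⟩`. -/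
theorem coble_lattice_isometry :
    ∃ P : Matrix (Fin 11) (Fin 11) ℤ, IsUnit P.det ∧ Pᵀ * gramB * P = gramA := by
  change IsIsometric gramA gramB
  rw [gramA_eq_two_smul_lorentzian, gramB_eq_two_smul_dsum]
  exact (isIsometric_dsum_latU_latE8_neg_one_lorentzian.smul 2).symm
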